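/- arXiv:1707.06497 — 2 statements merged into one kernel-verified Lean document; each statement's English description precedes it below -/
import Mathlib

section
/- Suppose the set X of distinct regressor values has exactly m+1 elements, with ordered values x^(0) < x^(1) < ⋯ < x^(m). Then there exist parameters θ, θ_0, …, θ_{m−1} ∈ ℝ such that the piecewise linear model L with split points s_k = x^(k), k = 0, …, m−1, satisfies L(x^(i)) = ȳ_{x^(i)} for all i = 0, …, m; consequently the mean squared error of L on the data equals the lower bound (1/N) ∑_{k=1}^N (y_k − ȳ_{x_k})², i.e. a piecewise linear model of order m with split points in X attains the minimal MSE bound. -/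
open Finset

theorem pl_interp (f : ℝ → ℝ) : ∀ (m : ℕ) (xs : Fin (m + 1) → ℝ), StrictMono xs →
    ∃ (θ : ℝ) (θs : Fin m → ℝ), ∀ i : Fin (m + 1),
        (θ + ∑ k : Fin m,
            if xs k.castSucc ≤ xs i then (xs i - xs k.castSucc) * θs k else 0)
          = f (xs i) := by
  intro m
  induction m with
  | zero =>
    intro xs _
    refine ⟨f (xs 0), fun _ => 0, fun i => ?_⟩
    have : i = 0 := Fin.ext (by simp)
    subst this
    simp
  | succ m ih =>
    intro xs hxs
    obtain ⟨θ, θs, h⟩ := ih (fun i => xs i.castSucc)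
      (fun a b hab => hxs (Fin.castSucc_lt_castSucc_iff.mpr hab))
    have hlt : xs (Fin.last m).castSucc < xs (Fin.last (m + 1)) :=
      hxs (Fin.castSucc_lt_last _)
    have hd : xs (Fin.last (m + 1)) - xs (Fin.last m).castSucc ≠ 0 := sub_ne_zero.mpr hlt.ne'
    refine ⟨θ, Fin.snoc (α := fun _ => ℝ) θs ((f (xs (Fin.last (m + 1))) - (θ + ∑ k : Fin m,
            if xs k.castSucc.castSucc ≤ xs (Fin.last (m + 1)) then
              (xs (Fin.last (m + 1)) - xs k.castSucc.castSucc) * θs k else 0)) /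
        (xs (Fin.last (m + 1)) - xs (Fin.last m).castSucc)), fun i => ?_⟩
    rw [Fin.sum_univ_castSucc]
    simp only [Fin.snoc_castSucc, Fin.snoc_last]
    refine Fin.lastCases ?_ (fun j => ?_) i
    · rw [if_pos hlt.le, mul_div_cancel₀ _ hd]
      ring
    · have hz : ∀ t : ℝ, (if xs (Fin.last m).castSucc ≤ xs j.castSucc then
          (xs j.castSucc - xs (Fin.last m).castSucc) * t else 0) = 0 := by
        intro t
        split_ifs with hle
        · have := hxs.monotone (Fin.castSucc_le_castSucc_iff.mpr (Fin.le_last j))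
          rw [le_antisymm this hle]
          ring
        · rfl
      rw [hz, add_zero]
      exact h j

/-- If the set of distinct regressor values has exactly `m + 1` elements,
with ordered values `xs 0 < xs 1 < ⋯ < xs m`, then there exist parameters
`θ, θ₀, …, θ_{m−1}` such that the piecewise linear model `L` with split points
`s_k = xs k`, `k = 0, …, m − 1`, interpolates the conditional sample means `ȳ` at every
`xs i`; consequently the MSE of `L` on the data equals the lower bound
`(1/N) ∑ₖ (y_k − ȳ_{x_k})²`. -/
theorem piecewise_linear_attains_mse_bound
    (N : ℕ) (hN : 1 ≤ N) (x y : Fin N → ℝ)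
    (m : ℕ) (xs : Fin (m + 1) → ℝ) (hxs : StrictMono xs)
    (hX : Finset.image x Finset.univ = Finset.image xs Finset.univ)
    (ybar : ℝ → ℝ)
    (hybar : ∀ v : ℝ, ybar v =
      (∑ k : Fin N, if x k = v then y k else 0) /
      (∑ k : Fin N, if x k = v then (1 : ℝ) else 0)) :
    ∃ (θ : ℝ) (θs : Fin m → ℝ),
      (∀ i : Fin (m + 1),
        (θ + ∑ k : Fin m,
            if xs k.castSucc ≤ xs i then (xs i - xs k.castSucc) * θs k else 0)
          = ybar (xs i)) ∧
      ((1 : ℝ) / N) * ∑ k : Fin N,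
          (y k - (θ + ∑ j : Fin m,
            if xs j.castSucc ≤ x k then (x k - xs j.castSucc) * θs j else 0)) ^ 2
        = ((1 : ℝ) / N) * ∑ k : Fin N, (y k - ybar (x k)) ^ 2 := by
  obtain ⟨θ, θs, h⟩ := pl_interp ybar m xs hxs
  refine ⟨θ, θs, h, ?_⟩
  congr 1
  refine Finset.sum_congr rfl fun k _ => ?_
  have hk : x k ∈ Finset.image xs Finset.univ := by
    rw [← hX]
    exact Finset.mem_image_of_mem _ (Finset.mem_univ k)
  obtain ⟨i, _, hi⟩ := Finset.mem_image.mp hk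
  rw [← hi, h i]
end

section
/- Let x^(0) < x^(1) < ⋯ < x^(m) be m+1 distinct real numbers and let v_0, v_1, …, v_m ∈ ℝ be arbitrary target values. Then there exists a unique parameter vector (θ, θ_0, …, θ_{m−1}) ∈ ℝ^{m+1} such that the piecewise linear model L with split points s_k = x^(k), k = 0, …, m−1, satisfies L(x^(i)) = v_i for all i = 0, …, m. -/
open Finset

/-- Given `m + 1` distinct ordered points `xs 0 < ⋯ < xs m` and arbitrary
target values `v 0, …, v m`, there is a unique parameter vector `(θ, θ₀, …, θ_{m−1})`
such that the piecewise linear model with split points `s_k = xs k`, `k = 0, …, m − 1`,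
takes the value `v i` at `xs i` for every `i`. -/
theorem piecewise_linear_interpolation_existsUnique
    (m : ℕ) (xs : Fin (m + 1) → ℝ) (hxs : StrictMono xs)
    (v : Fin (m + 1) → ℝ) :
    ∃! p : ℝ × (Fin m → ℝ),
      ∀ i : Fin (m + 1),
        (p.1 + ∑ k : Fin m,
            if xs k.castSucc ≤ xs i then (xs i - xs k.castSucc) * p.2 k else 0)
          = v i := by
  induction m with
  | zero =>
    refine ⟨(v 0, fun _ => 0), ?_, ?_⟩
    · intro i
      have hi : i = 0 := by ext; simp
      subst hi
      simp
    · rintro ⟨a, b⟩ h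
      have h0 := h 0
      simp at h0
      exact Prod.ext h0 (Subsingleton.elim _ _)
  | succ m ih =>
    have hys : StrictMono (fun i : Fin (m + 1) => xs i.castSucc) :=
      hxs.comp Fin.strictMono_castSucc
    obtain ⟨q, hq, hu⟩ := ih (fun i => xs i.castSucc) hys (fun i => v i.castSucc)
    have hd : 0 < xs (Fin.last (m + 1)) - xs (Fin.last m).castSucc :=
      sub_pos.mpr (hxs (Fin.castSucc_lt_last _))
    -- the last summand vanishes at all but the last point
    have hz : ∀ (j : Fin (m + 1)) (t : ℝ),
        (if xs (Fin.last m).castSucc ≤ xs j.castSucc then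
          (xs j.castSucc - xs (Fin.last m).castSucc) * t else 0) = 0 := by
      intro j t
      split_ifs with h
      · have h2 := hys.monotone (Fin.le_last j)
        have h3 : xs j.castSucc = xs (Fin.last m).castSucc := le_antisymm h2 h
        rw [h3, sub_self, zero_mul]
      · rfl
    set S : ℝ := ∑ k : Fin m, if xs k.castSucc.castSucc ≤ xs (Fin.last (m + 1)) then
      (xs (Fin.last (m + 1)) - xs k.castSucc.castSucc) * q.2 k else 0 with hS
    have hle : xs (Fin.last m).castSucc ≤ xs (Fin.last (m + 1)) := (sub_pos.mp hd).le
    refine ⟨(q.1, Fin.snoc q.2 ((v (Fin.last (m + 1)) - q.1 - S) /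
      (xs (Fin.last (m + 1)) - xs (Fin.last m).castSucc))), ?_, ?_⟩
    · intro i
      rw [Fin.sum_univ_castSucc]
      simp only [Fin.snoc_castSucc, Fin.snoc_last]
      refine Fin.lastCases ?_ (fun j => ?_) i
      · rw [← hS, if_pos hle, mul_div_cancel₀ _ hd.ne']
        ring
      · rw [hz, add_zero]
        exact hq j
    · rintro ⟨a, b⟩ h
      have hab : (a, fun k : Fin m => b k.castSucc) = q := by
        apply hu
        intro j
        have hj := h j.castSucc
        rw [Fin.sum_univ_castSucc, hz, add_zero] at hj
        exact hj
      have hl := h (Fin.last (m + 1))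
      rw [Fin.sum_univ_castSucc, if_pos hle] at hl
      subst hab
      simp only at hl hS
      rw [← hS] at hl
      refine Prod.ext rfl ?_
      funext k
      refine Fin.lastCases ?_ (fun j => ?_) k
      · simp only [Fin.snoc_last]
        rw [eq_div_iff hd.ne']
        linarith
      · simp only [Fin.snoc_castSucc]
end
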